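/- arXiv:1505.07694 — 3 statements merged into one kernel-verified Lean document; each statement's English description precedes it below -/
import Mathlib

section
/- Nonnegativity of the thermal energy term: for all ϑ, ϑ̄ > 0, Q(ϑ) − Q(ϑ̄) − ϑ̄ (R(ϑ) − R(ϑ̄)) ≥ 0. -/
open Set

/-!
For fixed `ϑb > 0`, the function `t ↦ Q t - ϑb * R t` has derivative `(t - ϑb) * (Cv t / t)`, which
has the sign of `t - ϑb`. It is therefore minimal at `ϑb`, and the thermal energy term is its
increment from `ϑb` to `ϑ`.
-/

-- The `isMinOn_Ioi_of_deriv` family treats each shape of interval separately and assumes two-sided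
-- continuity at endpoints; one-sided derivatives cover every shape at once.
lemma isMinOn_of_hasDerivWithinAt_nonpos_nonneg {s : Set ℝ} {f f' : ℝ → ℝ} {b : ℝ}
    (hs : Convex ℝ s) (hb : b ∈ s) (hf : ∀ t ∈ s, HasDerivWithinAt f (f' t) s t)
    (hleft : ∀ t ∈ s, t < b → f' t ≤ 0) (hright : ∀ t ∈ s, b < t → 0 ≤ f' t) :
    IsMinOn f s b := by
  have hcont : ContinuousOn f s := HasDerivWithinAt.continuousOn hf
  have hf_interior (u : Set ℝ) : ∀ t ∈ interior (s ∩ u),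
      HasDerivWithinAt f (f' t) (interior (s ∩ u)) t := fun t ht =>
    (hf t (interior_subset ht).1).mono (interior_subset.trans inter_subset_left)
  have hanti : AntitoneOn f (s ∩ Iic b) :=
    antitoneOn_of_hasDerivWithinAt_nonpos (hs.inter (convex_Iic b))
      (hcont.mono inter_subset_left) (hf_interior _) fun t ht =>
        hleft t (interior_subset ht).1 (interior_Iic.subset (interior_mono inter_subset_right ht))
  have hmono : MonotoneOn f (s ∩ Ici b) :=
    monotoneOn_of_hasDerivWithinAt_nonneg (hs.inter (convex_Ici b))
      (hcont.mono inter_subset_left) (hf_interior _) fun t ht =>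
        hright t (interior_subset ht).1 (interior_Ici.subset (interior_mono inter_subset_right ht))
  intro x hx
  rcases le_total x b with hxb | hbx
  · exact hanti ⟨hx, hxb⟩ ⟨hb, self_mem_Iic⟩ hxb
  · exact hmono ⟨hb, self_mem_Ici⟩ ⟨hx, hbx⟩ hbx

lemma mul_sub_le_sub_of_hasDerivWithinAt_mul {s : Set ℝ} {F G g w : ℝ → ℝ} {b x : ℝ}
    (hs : Convex ℝ s) (hg : MonotoneOn g s) (hw : ∀ t ∈ s, 0 ≤ w t)
    (hF : ∀ t ∈ s, HasDerivWithinAt F (g t * w t) s t)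
    (hG : ∀ t ∈ s, HasDerivWithinAt G (w t) s t) (hb : b ∈ s) (hx : x ∈ s) :
    g b * (G x - G b) ≤ F x - F b := by
  have hderiv (t : ℝ) (ht : t ∈ s) :
      HasDerivWithinAt (fun y => F y - g b * G y) ((g t - g b) * w t) s t := by
    rw [sub_mul]
    exact (hF t ht).sub ((hG t ht).const_mul (g b))
  have hmin : IsMinOn (fun y => F y - g b * G y) s b :=
    isMinOn_of_hasDerivWithinAt_nonpos_nonneg hs hb hderiv
      (fun t ht htb => mul_nonpos_of_nonpos_of_nonneg (sub_nonpos.2 (hg ht hb htb.le)) (hw t ht))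
      (fun t ht hbt => mul_nonneg (sub_nonneg.2 (hg hb ht hbt.le)) (hw t ht))
  have hle : F b - g b * G b ≤ F x - g b * G x := hmin hx
  linarith

theorem thermal_energy_term_nonneg_general {Cv Q R : ℝ → ℝ}
    (hCv : ∀ ϑ > (0 : ℝ), 0 ≤ Cv ϑ)
    (hQ : ∀ ϑ > (0 : ℝ), HasDerivAt Q (Cv ϑ) ϑ)
    (hR : ∀ ϑ > (0 : ℝ), HasDerivAt R (Cv ϑ / ϑ) ϑ)
    {ϑ ϑb : ℝ} (hϑ : 0 < ϑ) (hϑb : 0 < ϑb) :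
    0 ≤ Q ϑ - Q ϑb - ϑb * (R ϑ - R ϑb) := by
  have hQ_mul (t : ℝ) (ht : t ∈ Ioi 0) : HasDerivWithinAt Q (t * (Cv t / t)) (Ioi 0) t := by
    rw [mul_div_cancel₀ _ (ne_of_gt ht)]
    exact (hQ t ht).hasDerivWithinAt
  exact sub_nonneg.2 <| mul_sub_le_sub_of_hasDerivWithinAt_mul (convex_Ioi 0)
    monotoneOn_id (fun t ht => div_nonneg (hCv t ht) (le_of_lt ht)) hQ_mul
    (fun t ht => (hR t ht).hasDerivWithinAt) hϑb hϑ

/-- **Nonnegativity of the thermal energy term.**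
For all ϑ, ϑ̄ > 0, Q(ϑ) − Q(ϑ̄) − ϑ̄ (R(ϑ) − R(ϑ̄)) ≥ 0. -/
theorem thermal_energy_term_nonneg
    (Cv Q R : ℝ → ℝ)
    (hCv_smooth : ContDiffOn ℝ (⊤ : ℕ∞) Cv (Ioi 0))
    (hCv_pos : ∀ ϑ > (0:ℝ), 0 < Cv ϑ)
    (hQ : ∀ ϑ > (0:ℝ), HasDerivAt Q (Cv ϑ) ϑ)
    (hR : ∀ ϑ > (0:ℝ), HasDerivAt R (Cv ϑ / ϑ) ϑ) :
    ∀ ϑ > (0:ℝ), ∀ ϑb > (0:ℝ),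
      0 ≤ Q ϑ - Q ϑb - ϑb * (R ϑ - R ϑb) := by
  intro ϑ hϑ ϑb hϑb
  exact thermal_energy_term_nonneg_general (fun t ht => (hCv_pos t ht).le) hQ hR hϑ hϑb
end

section
/- Pointwise vacuum control by the elastic Bregman term: assume there exist c > 0, δ > 0 and γ ≥ 2 such that p_e(τ) ≥ c τ^{−γ} for all τ ∈ (0, δ). Fix τ̄ > 0. Then there exist constants C₁ > 0 and C > 0 such that for every τ > 0 with 1/τ > C₁, one has 1/τ ≤ C ( P_e(τ) − P_e(τ̄) + p_e(τ̄)(τ − τ̄) ). -/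
open Set

open Filter Topology

/-!
Since `γ ≥ 2`, near `0` we have `Pe′ = -pe ≤ -c / τ²`, so `Pe - c / τ` is nonincreasing there and
`Pe τ ≥ c / τ - K`. The remaining part of the Bregman term is affine in `τ`, hence bounded near `0`,
and once `1 / τ` is large all the bounded terms are absorbed in half of `c / τ`.
-/

lemma inv_sq_le_rpow_neg {t γ : ℝ} (ht : 0 < t) (ht1 : t ≤ 1) (hγ : 2 ≤ γ) :
    (t ^ 2)⁻¹ ≤ t ^ (-γ) :=
  calc (t ^ 2)⁻¹ = t ^ (-2 : ℝ) := by rw [Real.rpow_neg ht.le, Real.rpow_two]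
    _ ≤ t ^ (-γ) := Real.rpow_le_rpow_of_exponent_ge ht ht1 (neg_le_neg hγ)

lemma antitoneOn_sub_mul_inv_of_hasDerivAt_le {f f' : ℝ → ℝ} {s : Set ℝ} {c : ℝ}
    (hs : Convex ℝ s) (hs0 : ∀ t ∈ s, t ≠ 0) (hf : ∀ t ∈ s, HasDerivAt f (f' t) t)
    (hf' : ∀ t ∈ s, f' t ≤ -(c * (t ^ 2)⁻¹)) :
    AntitoneOn (fun t ↦ f t - c * t⁻¹) s := by
  have hderiv : ∀ t ∈ s, HasDerivAt (fun t ↦ f t - c * t⁻¹) (f' t - c * -(t ^ 2)⁻¹) t :=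
    fun t ht ↦ (hf t ht).sub ((hasDerivAt_inv (hs0 t ht)).const_mul c)
  refine antitoneOn_of_hasDerivWithinAt_nonpos hs
    (fun t ht ↦ (hderiv t ht).continuousAt.continuousWithinAt)
    (fun t ht ↦ (hderiv t (interior_subset ht)).hasDerivWithinAt) fun t ht ↦ ?_
  linarith [hf' t (interior_subset ht)]

lemma exists_eventually_mul_inv_sub_le {f f' : ℝ → ℝ} {c : ℝ}
    (hf : ∀ᶠ t in 𝓝[>] 0, HasDerivAt f (f' t) t)
    (hf' : ∀ᶠ t in 𝓝[>] 0, f' t ≤ -(c * (t ^ 2)⁻¹)) :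
    ∃ K, ∀ᶠ t in 𝓝[>] 0, c * t⁻¹ - K ≤ f t := by
  obtain ⟨ε, hε, hεf⟩ := mem_nhdsGT_iff_exists_Ioo_subset.1 (hf.and hf')
  have hanti : AntitoneOn (fun t ↦ f t - c * t⁻¹) (Ioo 0 ε) :=
    antitoneOn_sub_mul_inv_of_hasDerivAt_le (convex_Ioo 0 ε) (fun t ht ↦ ht.1.ne')
      (fun t ht ↦ (hεf ht).1) (fun t ht ↦ (hεf ht).2)
  obtain ⟨m, hm⟩ : (Ioo 0 ε).Nonempty := nonempty_Ioo.2 hε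
  refine ⟨-(f m - c * m⁻¹), ?_⟩
  filter_upwards [Ioo_mem_nhdsGT hm.1] with t ht
  have hmt : f m - c * m⁻¹ ≤ f t - c * t⁻¹ := hanti ⟨ht.1, ht.2.trans hm.2⟩ hm ht.2.le
  linarith

lemma eventually_le_two_div_mul_of_mul_sub_le {α : Type*} {l : Filter α} {u f : α → ℝ} {c K : ℝ}
    (hc : 0 < c) (hu : Tendsto u l atTop) (hf : ∀ᶠ x in l, c * u x - K ≤ f x) :
    ∀ᶠ x in l, u x ≤ 2 / c * f x := by
  filter_upwards [hf, hu.eventually_ge_atTop (2 * K / c)] with x hfx hux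
  rw [div_le_iff₀ hc] at hux
  rw [div_mul_eq_mul_div, le_div_iff₀ hc]
  linarith

lemma exists_forall_lt_one_div_of_eventually_nhdsGT {p : ℝ → Prop} (hp : ∀ᶠ t in 𝓝[>] 0, p t) :
    ∃ M > (0 : ℝ), ∀ t > (0 : ℝ), M < 1 / t → p t := by
  obtain ⟨ε, hε, hεp⟩ := mem_nhdsGT_iff_exists_Ioo_subset.1 hp
  exact ⟨1 / ε, one_div_pos.2 hε, fun t ht hMt ↦ hεp ⟨ht, (one_div_lt_one_div hε ht).1 hMt⟩⟩

theorem pointwise_vacuum_control_general {pe Pe : ℝ → ℝ} {c δ γ : ℝ}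
    (hPe : ∀ τ ∈ Ioo 0 δ, HasDerivAt Pe (-(pe τ)) τ) (hc : 0 < c) (hδ : 0 < δ) (hγ : 2 ≤ γ)
    (hgrowth : ∀ τ ∈ Ioo 0 δ, c * τ ^ (-γ) ≤ pe τ) (P₀ p₀ τ₀ : ℝ) :
    ∃ C₁ > (0 : ℝ), ∃ C > (0 : ℝ), ∀ τ > (0 : ℝ),
      C₁ < 1 / τ → 1 / τ ≤ C * (Pe τ - P₀ + p₀ * (τ - τ₀)) := by
  have hderiv : ∀ᶠ τ in 𝓝[>] 0, HasDerivAt Pe (-(pe τ)) τ :=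
    eventually_of_mem (Ioo_mem_nhdsGT hδ) hPe
  have hderiv_le : ∀ᶠ τ in 𝓝[>] 0, -(pe τ) ≤ -(c * (τ ^ 2)⁻¹) := by
    filter_upwards [Ioo_mem_nhdsGT hδ, Ioo_mem_nhdsGT one_pos] with τ hτδ hτ1
    exact neg_le_neg <|
      (mul_le_mul_of_nonneg_left (inv_sq_le_rpow_neg hτ1.1 hτ1.2.le hγ) hc.le).trans
        (hgrowth τ hτδ)
  obtain ⟨K, hK⟩ := exists_eventually_mul_inv_sub_le hderiv hderiv_le
  have haffine : Tendsto (fun τ ↦ p₀ * (τ - τ₀)) (𝓝[>] 0) (𝓝 (p₀ * (0 - τ₀))) :=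
    (Continuous.tendsto (by fun_prop) 0).mono_left nhdsWithin_le_nhds
  obtain ⟨B, hB⟩ := haffine.isBoundedUnder_ge.eventually_ge
  have hlower : ∀ᶠ τ in 𝓝[>] 0, c * τ⁻¹ - (K + P₀ - B) ≤ Pe τ - P₀ + p₀ * (τ - τ₀) := by
    filter_upwards [hK, hB] with τ hKτ hBτ
    linarith
  obtain ⟨C₁, hC₁, hC₁le⟩ := exists_forall_lt_one_div_of_eventually_nhdsGT
    (eventually_le_two_div_mul_of_mul_sub_le hc tendsto_inv_nhdsGT_zero hlower)
  exact ⟨C₁, hC₁, 2 / c, by positivity, by simpa only [one_div] using hC₁le⟩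

/-- **Pointwise vacuum control by the elastic Bregman term.**
Assume p_e(τ) ≥ c τ^{−γ} on (0,δ) for some c, δ > 0 and γ ≥ 2.  Fix τ̄ > 0.
Then there are constants C₁ > 0 and C > 0 such that for every τ > 0 with
1/τ > C₁ one has 1/τ ≤ C (P_e(τ) − P_e(τ̄) + p_e(τ̄)(τ − τ̄)). -/
theorem pointwise_vacuum_control
    (pe Pe : ℝ → ℝ)
    (hpeC1 : ContDiffOn ℝ 1 pe (Ioi 0))
    (hpe_nonneg : ∀ τ > (0:ℝ), 0 ≤ pe τ)
    (hpe_mono : ∀ τ > (0:ℝ), deriv pe τ ≤ 0)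
    (hPe : ∀ τ > (0:ℝ), HasDerivAt Pe (-(pe τ)) τ)
    (c δ γ : ℝ) (hc : 0 < c) (hδ : 0 < δ) (hγ : 2 ≤ γ)
    (hgrowth : ∀ τ ∈ Ioo (0:ℝ) δ, c * τ ^ (-γ) ≤ pe τ)
    (τb : ℝ) (hτb : 0 < τb) :
    ∃ C₁ > (0:ℝ), ∃ C > (0:ℝ), ∀ τ > (0:ℝ),
      C₁ < 1 / τ → 1 / τ ≤ C * (Pe τ - Pe τb + pe τb * (τ - τb)) :=
  pointwise_vacuum_control_general (fun τ hτ ↦ hPe τ hτ.1) hc hδ hγ hgrowth (Pe τb) (pe τb) τb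
end

section
/- Heat-flux cross-term estimate: let κ > 0, ε > 0 and ϑ_L, ϑ_R > 0, and set m = min(ϑ_L, ϑ_R). Let τ : ℝ → (0,∞) be continuous and ϑ : ℝ → (0,∞) be C¹ such that h := ϑ′/(τ ϑ) is differentiable with h′ integrable on ℝ and h(x) → 0 as x → ±∞, and such that ϑ′²/(τ ϑ²) and 1/τ are integrable on [−ε, ε]. Then −∫_ℝ ( η(x/ε) ϑ_L + η(−x/ε) ϑ_R ) κ h′(x) dx ≤ (1/4) m ∫_{−ε}^{ε} κ ϑ′(x)²/(τ(x) ϑ(x)²) dx + (9 (ϑ_L − ϑ_R)² / (16 m)) (κ/ε²) ∫_{−ε}^{ε} (1/τ(x)) dx. -/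
open MeasureTheory Filter Topology Set

/-- The cutoff function η: η(x) = 1 for x ≤ −1, η(x) = (1/4)x³ − (3/4)x + 1/2
for −1 ≤ x ≤ 1, and η(x) = 0 for x ≥ 1. -/
noncomputable def cutoff (x : ℝ) : ℝ :=
  if x ≤ -1 then 1 else if x ≤ 1 then x ^ 3 / 4 - 3 / 4 * x + 1 / 2 else 0

/-!
Write `φ` for the weight `η(x/ε) ϑL + η(-x/ε) ϑR` and `h` for the flux. Since `φ` is bounded and
`h` vanishes at `±∞`, integration by parts turns `-∫ φ h'` into `∫ φ' h`. As `η'` is even and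
supported in `[-1, 1]` with `|η'| ≤ 3/4`, the derivative `φ'` lives on `[-ε, ε]` and satisfies
`|φ'| ≤ (3/4) |ϑL - ϑR| / ε`. Young's inequality `φ' h ≤ (m/4) τ h² + φ'² / (m τ)` then gives the
bound, because `τ h² = ϑ'² / (τ ϑ²)` when `h = ϑ' / (τ ϑ)`.
-/

theorem hasDerivAt_ite_le {E : Type*} [NormedAddCommGroup E] [NormedSpace ℝ E]
    {f g f' g' : ℝ → E} {a : ℝ} (hf : ∀ x, HasDerivAt f (f' x) x)
    (hg : ∀ x, HasDerivAt g (g' x) x) (hfg : f a = g a) (hfg' : f' a = g' a) (x : ℝ) :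
    HasDerivAt (fun y => if y ≤ a then f y else g y) (if x ≤ a then f' x else g' x) x := by
  rcases lt_trichotomy x a with hxa | rfl | hax
  · rw [if_pos hxa.le]
    refine (hf x).congr_of_eventuallyEq ?_
    filter_upwards [Iio_mem_nhds hxa] with y hya using if_pos (le_of_lt hya)
  · rw [if_pos le_rfl, ← hasDerivWithinAt_univ, ← Iic_union_Ici (a := x)]
    have eq_right : ∀ y ∈ Ici x, (if y ≤ x then f y else g y) = g y := by
      intro y hxy
      split_ifs with hyx
      · rw [le_antisymm hyx hxy, hfg]
      · rfl
    refine HasDerivWithinAt.union ?_ ?_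
    · exact (hf x).hasDerivWithinAt.congr (fun y hyx => if_pos hyx) (if_pos le_rfl)
    · rw [hfg']
      exact (hg x).hasDerivWithinAt.congr eq_right (eq_right x self_mem_Ici)
  · rw [if_neg hax.not_ge]
    refine (hg x).congr_of_eventuallyEq ?_
    filter_upwards [Ioi_mem_nhds hax] with y hay using if_neg (not_le_of_gt hay)

theorem integral_mul_deriv_eq_neg_intervalIntegral_deriv_mul {A : Type*} [NormedRing A]
    [NormedAlgebra ℝ A] [CompleteSpace A] {u u' v v' : ℝ → A} {a b C : ℝ}
    (hu : ∀ x, HasDerivAt u (u' x) x) (hv : ∀ x, HasDerivAt v (v' x) x)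
    (hu_bdd : ∀ x, ‖u x‖ ≤ C) (hu'_cont : Continuous u') (hu'_supp : u'.support ⊆ Ioc a b)
    (hv'_int : Integrable v') (hv_bot : Tendsto v atBot (𝓝 0)) (hv_top : Tendsto v atTop (𝓝 0)) :
    ∫ x, u x * v' x = -∫ x in a..b, u' x * v x := by
  have hu_cont : Continuous u := continuous_iff_continuousAt.2 fun x => (hu x).continuousAt
  have hv_cont : Continuous v := continuous_iff_continuousAt.2 fun x => (hv x).continuousAt
  have hu'v_supp : (u' * v).support ⊆ Ioc a b :=
    (Function.support_mul_subset_left u' v).trans hu'_supp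
  have huv'_int : Integrable (u * v') :=
    hv'_int.bdd_mul hu_cont.aestronglyMeasurable (Eventually.of_forall hu_bdd)
  have hu'v_int : Integrable (u' * v) :=
    (hu'_cont.mul hv_cont).integrable_of_hasCompactSupport <|
      .of_support_subset_isCompact isCompact_Icc (hu'v_supp.trans Ioc_subset_Icc_self)
  have tendsto_uv {l : Filter ℝ} (hv : Tendsto v l (𝓝 0)) : Tendsto (u * v) l (𝓝 0) :=
    isBoundedUnder_le_mul_tendsto_zero (isBoundedUnder_of ⟨C, hu_bdd⟩) hv
  calc ∫ x, u x * v' x = 0 - 0 - ∫ x, (u' * v) x :=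
        integral_mul_deriv_eq_deriv_mul (fun x _ => hu x) (fun x _ => hv x) huv'_int hu'v_int
          (tendsto_uv hv_bot) (tendsto_uv hv_top)
    _ = -∫ x in a..b, (u' * v) x := by
        rw [sub_zero, zero_sub, intervalIntegral.integral_eq_integral_of_support_subset hu'v_supp]

theorem mul_le_quarter_mul_sq_add_sq_div_mul {K : Type*} [Field K] [LinearOrder K]
    [IsStrictOrderedRing K] {m t : K} (hm : 0 < m) (ht : 0 < t) (p y : K) :
    p * y ≤ m / 4 * (t * y ^ 2) + p ^ 2 / m * (1 / t) := by
  have complete_square : m / 4 * (t * y ^ 2) + p ^ 2 / m * (1 / t) - p * y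
      = (m * t * y / 2 - p) ^ 2 / (m * t) := by
    field_simp
    ring
  have : 0 ≤ (m * t * y / 2 - p) ^ 2 / (m * t) := by positivity
  linarith

theorem integral_mul_le_quarter_mul_integral_add {α : Type*} [MeasurableSpace α] {μ : Measure α}
    {p h τ : α → ℝ} {m C : ℝ} (hm : 0 < m) (hτ : ∀ᵐ x ∂μ, 0 < τ x) (hp : ∀ᵐ x ∂μ, |p x| ≤ C)
    (hph : Integrable (fun x => p x * h x) μ) (hτh : Integrable (fun x => τ x * h x ^ 2) μ)
    (hτ_inv : Integrable (fun x => 1 / τ x) μ) :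
    ∫ x, p x * h x ∂μ ≤ m / 4 * ∫ x, τ x * h x ^ 2 ∂μ + C ^ 2 / m * ∫ x, 1 / τ x ∂μ := by
  rw [← integral_const_mul, ← integral_const_mul,
    ← integral_add (hτh.const_mul _) (hτ_inv.const_mul _)]
  refine integral_mono_ae hph ((hτh.const_mul _).add (hτ_inv.const_mul _)) ?_
  filter_upwards [hτ, hp] with x hτx hpx
  have hsq : p x ^ 2 ≤ C ^ 2 := sq_le_sq.2 (hpx.trans (le_abs_self C))
  calc p x * h x ≤ m / 4 * (τ x * h x ^ 2) + p x ^ 2 / m * (1 / τ x) :=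
        mul_le_quarter_mul_sq_add_sq_div_mul hm hτx _ _
    _ ≤ m / 4 * (τ x * h x ^ 2) + C ^ 2 / m * (1 / τ x) := by gcongr

theorem sq_div_mul_sq_eq_mul_div_mul_sq {K : Type*} [Field K] {t : K} (ht : t ≠ 0) (p y : K) :
    p ^ 2 / (t * y ^ 2) = t * (p / (t * y)) ^ 2 := by
  field_simp

theorem abs_cutoff_le_one (x : ℝ) : |cutoff x| ≤ 1 := by
  unfold cutoff
  split_ifs with hx₁ hx₂
  · simp
  · have one_sub_eq : 1 - (x ^ 3 / 4 - 3 / 4 * x + 1 / 2) = (x + 1) ^ 2 * (2 - x) / 4 := by ring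
    have self_eq : x ^ 3 / 4 - 3 / 4 * x + 1 / 2 = (x - 1) ^ 2 * (x + 2) / 4 := by ring
    have self_nonneg : 0 ≤ x ^ 3 / 4 - 3 / 4 * x + 1 / 2 := by
      rw [self_eq]
      exact div_nonneg (mul_nonneg (sq_nonneg _) (by linarith)) zero_le_four
    have self_le_one : x ^ 3 / 4 - 3 / 4 * x + 1 / 2 ≤ 1 := by
      rw [← sub_nonneg, one_sub_eq]
      exact div_nonneg (mul_nonneg (sq_nonneg _) (by linarith)) zero_le_four
    rwa [abs_of_nonneg self_nonneg]
  · simp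

/-- The derivative `η'` of the cutoff. The minimum with `0` encodes that the derivative
`3/4 (x² - 1)` of the cubic piece is negative exactly on `(-1, 1)`. -/
noncomputable def cutoffDeriv (x : ℝ) : ℝ := min (3 / 4 * (x ^ 2 - 1)) 0

theorem cutoffDeriv_neg (x : ℝ) : cutoffDeriv (-x) = cutoffDeriv x := by
  simp only [cutoffDeriv, neg_sq]

theorem continuous_cutoffDeriv : Continuous cutoffDeriv := by
  unfold cutoffDeriv
  fun_prop

theorem abs_cutoffDeriv_le (x : ℝ) : |cutoffDeriv x| ≤ 3 / 4 := by
  rw [cutoffDeriv, abs_of_nonpos (min_le_right _ _), neg_le]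
  exact le_min (by nlinarith [sq_nonneg x]) (by norm_num)

theorem cutoffDeriv_of_one_le_abs {x : ℝ} (hx : 1 ≤ |x|) : cutoffDeriv x = 0 :=
  min_eq_right (by linarith [(one_le_sq_iff_one_le_abs x).2 hx])

theorem cutoffDeriv_of_abs_le_one {x : ℝ} (hx : |x| ≤ 1) :
    cutoffDeriv x = 3 / 4 * (x ^ 2 - 1) :=
  min_eq_left (by linarith [(sq_le_one_iff_abs_le_one x).2 hx])

theorem cutoffDeriv_eq_ite (x : ℝ) :
    cutoffDeriv x = if x ≤ -1 then 0 else if x ≤ 1 then 3 / 4 * (x ^ 2 - 1) else 0 := by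
  split_ifs with hx₁ hx₂
  · exact cutoffDeriv_of_one_le_abs (le_abs'.2 (.inl hx₁))
  · exact cutoffDeriv_of_abs_le_one (abs_le.2 ⟨(not_le.1 hx₁).le, hx₂⟩)
  · exact cutoffDeriv_of_one_le_abs (le_abs'.2 (.inr (not_le.1 hx₂).le))

theorem hasDerivAt_cutoff (x : ℝ) : HasDerivAt cutoff (cutoffDeriv x) x := by
  have hasDerivAt_cubic (y : ℝ) : HasDerivAt (fun y : ℝ => y ^ 3 / 4 - 3 / 4 * y + 1 / 2)
      (3 / 4 * (y ^ 2 - 1)) y := by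
    refine ((((hasDerivAt_pow 3 y).div_const 4).sub
      ((hasDerivAt_id' y).const_mul (3 / 4))).add_const (1 / 2)).congr_deriv ?_
    norm_num
    ring
  rw [cutoffDeriv_eq_ite]
  exact hasDerivAt_ite_le (fun y => hasDerivAt_const y 1)
    (hasDerivAt_ite_le hasDerivAt_cubic (fun y => hasDerivAt_const y 0) (by norm_num)
      (by norm_num)) (by norm_num) (by norm_num) x

/-- The C¹ transition at scale `ε` from the value `a` on the left to the value `b` on the
right: the weight multiplying the heat flux derivative. -/
noncomputable def cutoffBlend (ε a b x : ℝ) : ℝ := cutoff (x / ε) * a + cutoff (-x / ε) * b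

/-- The derivative of `cutoffBlend ε a b`; its two terms combine because the cutoff has an even
derivative. -/
noncomputable def cutoffBlendDeriv (ε a b x : ℝ) : ℝ := (a - b) / ε * cutoffDeriv (x / ε)

section cutoffBlend

variable (ε a b : ℝ)

theorem hasDerivAt_cutoffBlend (x : ℝ) :
    HasDerivAt (cutoffBlend ε a b) (cutoffBlendDeriv ε a b x) x := by
  have hleft := ((hasDerivAt_cutoff (x / ε)).comp x ((hasDerivAt_id' x).div_const ε)).mul_const a
  have hright := ((hasDerivAt_cutoff (-x / ε)).comp x
    ((hasDerivAt_id' x).neg.div_const ε)).mul_const b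
  refine (hleft.add hright).congr_deriv ?_
  rw [cutoffBlendDeriv, neg_div ε x, cutoffDeriv_neg]
  ring

theorem abs_cutoffBlend_le (x : ℝ) : |cutoffBlend ε a b x| ≤ |a| + |b| := by
  refine (abs_add_le _ _).trans ?_
  rw [abs_mul, abs_mul]
  exact add_le_add (mul_le_of_le_one_left (abs_nonneg a) (abs_cutoff_le_one _))
    (mul_le_of_le_one_left (abs_nonneg b) (abs_cutoff_le_one _))

theorem continuous_cutoffBlendDeriv : Continuous (cutoffBlendDeriv ε a b) :=
  (continuous_cutoffDeriv.comp (continuous_id.div_const ε)).const_mul _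

theorem abs_cutoffBlendDeriv_le (x : ℝ) :
    |cutoffBlendDeriv ε a b x| ≤ |(a - b) / ε| * (3 / 4) := by
  rw [cutoffBlendDeriv, abs_mul]
  exact mul_le_mul_of_nonneg_left (abs_cutoffDeriv_le _) (abs_nonneg _)

variable {ε} in
theorem support_cutoffBlendDeriv_subset (hε : 0 < ε) :
    (cutoffBlendDeriv ε a b).support ⊆ Ioc (-ε) ε := by
  intro x hx
  have hlt : |x| < ε := by
    by_contra! hle
    refine hx ?_
    have : 1 ≤ |x / ε| := by rwa [abs_div, abs_of_pos hε, one_le_div hε]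
    rw [cutoffBlendDeriv, cutoffDeriv_of_one_le_abs this, mul_zero]
  exact Ioo_subset_Ioc_self (abs_lt.1 hlt)

end cutoffBlend

theorem intervalIntegral_cutoffBlendDeriv_mul_le {ε m : ℝ} (hε : 0 < ε) (hm : 0 < m) (a b : ℝ)
    {τ h : ℝ → ℝ} (hτ : ∀ x ∈ Ioc (-ε) ε, 0 < τ x) (hh : Continuous h)
    (hτh : IntegrableOn (fun x => τ x * h x ^ 2) (Ioc (-ε) ε))
    (hτ_inv : IntegrableOn (fun x => 1 / τ x) (Ioc (-ε) ε)) :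
    ∫ x in (-ε)..ε, cutoffBlendDeriv ε a b x * h x ≤
      m / 4 * (∫ x in (-ε)..ε, τ x * h x ^ 2)
        + 9 * (a - b) ^ 2 / (16 * m) / ε ^ 2 * ∫ x in (-ε)..ε, 1 / τ x := by
  have const_eq : 9 * (a - b) ^ 2 / (16 * m) / ε ^ 2 = (|(a - b) / ε| * (3 / 4)) ^ 2 / m := by
    rw [mul_pow, sq_abs]
    ring
  have hmul_int : IntegrableOn (fun x => cutoffBlendDeriv ε a b x * h x) (Ioc (-ε) ε) :=
    ((continuous_cutoffBlendDeriv ε a b).mul hh).integrableOn_Ioc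
  simp only [const_eq, intervalIntegral.integral_of_le (neg_le_self hε.le)]
  exact integral_mul_le_quarter_mul_integral_add hm (ae_restrict_of_forall_mem measurableSet_Ioc hτ)
    (Eventually.of_forall (abs_cutoffBlendDeriv_le ε a b)) hmul_int hτh hτ_inv

theorem heat_flux_cross_term_estimate_general {κ ε m : ℝ} (hκ : 0 ≤ κ) (hε : 0 < ε) (hm : 0 < m)
    (a b : ℝ) {τ h h' : ℝ → ℝ} (hτ : ∀ x ∈ Ioc (-ε) ε, 0 < τ x)
    (hh : ∀ x, HasDerivAt h (h' x) x) (hh'_int : Integrable h')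
    (hh_top : Tendsto h atTop (𝓝 0)) (hh_bot : Tendsto h atBot (𝓝 0))
    (hτh : IntegrableOn (fun x => τ x * h x ^ 2) (Ioc (-ε) ε))
    (hτ_inv : IntegrableOn (fun x => 1 / τ x) (Ioc (-ε) ε)) :
    -∫ x, (cutoff (x / ε) * a + cutoff (-x / ε) * b) * (κ * h' x)
      ≤ 1 / 4 * m * (∫ x in (-ε)..ε, κ * (τ x * h x ^ 2))
        + 9 * (a - b) ^ 2 / (16 * m) * (κ / ε ^ 2) * ∫ x in (-ε)..ε, 1 / τ x := by
  have hh_cont : Continuous h := continuous_iff_continuousAt.2 fun x => (hh x).continuousAt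
  calc -∫ x, cutoffBlend ε a b x * (κ * h' x)
      = κ * -∫ x, cutoffBlend ε a b x * h' x := by
        simp only [mul_left_comm _ κ, integral_const_mul, mul_neg]
    _ = κ * ∫ x in (-ε)..ε, cutoffBlendDeriv ε a b x * h x := by
        rw [integral_mul_deriv_eq_neg_intervalIntegral_deriv_mul (hasDerivAt_cutoffBlend ε a b) hh
          (abs_cutoffBlend_le ε a b) (continuous_cutoffBlendDeriv ε a b)
          (support_cutoffBlendDeriv_subset a b hε) hh'_int hh_bot hh_top, neg_neg]
    _ ≤ κ * (m / 4 * (∫ x in (-ε)..ε, τ x * h x ^ 2)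
          + 9 * (a - b) ^ 2 / (16 * m) / ε ^ 2 * ∫ x in (-ε)..ε, 1 / τ x) :=
        mul_le_mul_of_nonneg_left
          (intervalIntegral_cutoffBlendDeriv_mul_le hε hm a b hτ hh_cont hτh hτ_inv) hκ
    _ = _ := by
        rw [intervalIntegral.integral_const_mul]
        ring

/-- **Heat-flux cross-term estimate.**
Let κ > 0, ε > 0, ϑ_L, ϑ_R > 0, m = min(ϑ_L, ϑ_R).  Let τ be continuous positive,
ϑ be C¹ positive, with h = ϑ′/(τϑ) differentiable, h′ integrable, h → 0 at ±∞, and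
ϑ′²/(τϑ²), 1/τ integrable on [−ε,ε].  Then
−∫ (η(x/ε)ϑ_L + η(−x/ε)ϑ_R) κ h′(x) dx
  ≤ (1/4) m ∫_{−ε}^{ε} κ ϑ′²/(τϑ²) + (9(ϑ_L−ϑ_R)²/(16 m)) (κ/ε²) ∫_{−ε}^{ε} 1/τ. -/
theorem heat_flux_cross_term_estimate
    (κ ε ϑL ϑR : ℝ) (hκ : 0 < κ) (hε : 0 < ε) (hϑL : 0 < ϑL) (hϑR : 0 < ϑR)
    (τ ϑ : ℝ → ℝ)
    (hτcont : Continuous τ) (hτpos : ∀ x, 0 < τ x)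
    (hϑC1 : ContDiff ℝ 1 ϑ) (hϑpos : ∀ x, 0 < ϑ x)
    (hhdiff : Differentiable ℝ (fun x => deriv ϑ x / (τ x * ϑ x)))
    (hh'int : Integrable (deriv (fun x => deriv ϑ x / (τ x * ϑ x))))
    (hhtop : Tendsto (fun x => deriv ϑ x / (τ x * ϑ x)) atTop (𝓝 0))
    (hhbot : Tendsto (fun x => deriv ϑ x / (τ x * ϑ x)) atBot (𝓝 0))
    (hint1 : IntegrableOn (fun x => (deriv ϑ x) ^ 2 / (τ x * (ϑ x) ^ 2)) (Icc (-ε) ε))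
    (hint2 : IntegrableOn (fun x => 1 / τ x) (Icc (-ε) ε)) :
    -∫ x : ℝ, (cutoff (x / ε) * ϑL + cutoff (-x / ε) * ϑR)
        * (κ * deriv (fun y => deriv ϑ y / (τ y * ϑ y)) x)
      ≤ (1 / 4) * min ϑL ϑR * (∫ x in (-ε)..ε, κ * (deriv ϑ x) ^ 2 / (τ x * (ϑ x) ^ 2))
        + (9 * (ϑL - ϑR) ^ 2 / (16 * min ϑL ϑR)) * (κ / ε ^ 2)
          * ∫ x in (-ε)..ε, 1 / τ x := by
  simp only [mul_div_assoc κ, fun x => sq_div_mul_sq_eq_mul_div_mul_sq (hτpos x).ne'] at hint1 ⊢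
  exact heat_flux_cross_term_estimate_general hκ.le hε (lt_min hϑL hϑR) ϑL ϑR
    (fun x _ => hτpos x) (fun x => (hhdiff x).hasDerivAt) hh'int hhtop hhbot
    (hint1.mono_set Ioc_subset_Icc_self) (hint2.mono_set Ioc_subset_Icc_self)
end
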